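/- Let n ≥ 1 and d ≥ 1, and let X = (S^d)^{×n} be the product of n copies of the sphere S^d with the product topology. Then cat(X) = n. -/

import Mathlib

open scoped ENNReal

/-- The Lyusternik–Schnirelmann category of a space `X`: the least `n` (or `∞`) such that `X`
admits a cover by `n + 1` open sets whose inclusions into `X` are null-homotopic. -/
noncomputable def LScat (X : Type*) [TopologicalSpace X] : ℕ∞ :=
  sInf {n : ℕ∞ | ∃ m : ℕ, n = (m : ℕ∞) ∧
    ∃ U : Fin (m + 1) → Set X, (∀ i, IsOpen (U i)) ∧ (⋃ i, U i) = Set.univ ∧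
      ∀ i, ∃ x : X,
        ContinuousMap.Homotopic
          (⟨Subtype.val, continuous_subtype_val⟩ : C(U i, X))
          (ContinuousMap.const (U i) x)}

/-- The unit sphere `S^d ⊆ ℝ^{d+1}` with its subspace topology. -/
noncomputable def unitSphere (d : ℕ) : Type :=
  Metric.sphere (0 : EuclideanSpace ℝ (Fin (d + 1))) 1

noncomputable instance (d : ℕ) : TopologicalSpace (unitSphere d) :=
  instTopologicalSpaceSubtype

/-!
Upper bound: each sphere is covered by two contractible open sets `A i`, `B i`, the complements of a
point and of its antipode. Let `φ i` be `0` off `B i` and `1` off `A i`. Points of the product are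
sorted by a set `J` of coordinates on which `φ` is `< 1` and lies strictly below its values, all
`> 0`, at the other coordinates. Such a cell contracts factor by factor, and two cells with distinct
`J` of the same cardinality are disjoint, so the contractions of the cells with `|J| = k` glue; the
values `k = 0, …, n` give `n + 1` open sets.

Lower bound: given at most `n` open sets contracting to points `x k`, shrink them to closed sets
`A k` that still cover and deform the identity to a map `f k` sending `A k` to `x k`. Taking the
`i`-th coordinate from `f (g i)`, with `g` a surjection from coordinates to sets of the cover, gives
a map homotopic to the identity. It misses any `q` with `q i ≠ x (g i) i` for all `i`. This is
impossible: extend the homotopy radially to a self-map of `∏ i, E i` which is the identity at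
infinity, hence onto by the no-retraction theorem.
-/

open Set Metric MeasureTheory Module Filter ContinuousMap
open scoped NNReal Polynomial Topology unitInterval

section Brouwer

lemma exists_polynomial_eval_eq_integral {𝕜 α : Type*} [RCLike 𝕜] [MeasurableSpace α]
    {μ : Measure α} {f : 𝕜 → α → 𝕜} {N : ℕ} (hint : ∀ t, Integrable (f t) μ)
    (hpoly : ∀ x, ∃ p : 𝕜[X], p.natDegree ≤ N ∧ ∀ t, p.eval t = f t x) :
    ∃ P : 𝕜[X], ∀ t, P.eval t = ∫ x, f t x ∂μ := by
  let nodes : Finset ℕ := Finset.range (N + 1)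
  let ℓ : ℕ → 𝕜[X] := Lagrange.basis nodes Nat.cast
  have interpolation : ∀ t x, f t x = ∑ k ∈ nodes, f k x * (ℓ k).eval t := by
    intro t x
    obtain ⟨p, hdeg, hp⟩ := hpoly x
    have hcard : p.degree < nodes.card := by
      rw [Finset.card_range]
      exact (Polynomial.degree_le_of_natDegree_le hdeg).trans_lt (mod_cast N.lt_succ_self)
    rw [← hp, Lagrange.eq_interpolate (v := Nat.cast) Nat.cast_injective.injOn hcard]
    simp only [Lagrange.interpolate_apply, Polynomial.eval_finsetSum, Polynomial.eval_mul,
      Polynomial.eval_C, hp, ℓ, nodes]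
  refine ⟨∑ k ∈ nodes, Polynomial.C (∫ x, f k x ∂μ) * ℓ k, fun t => ?_⟩
  calc (∑ k ∈ nodes, Polynomial.C (∫ x, f k x ∂μ) * ℓ k).eval t
      = ∑ k ∈ nodes, ∫ x, f k x * (ℓ k).eval t ∂μ := by
        simp only [Polynomial.eval_finsetSum, Polynomial.eval_mul, Polynomial.eval_C,
          integral_mul_const]
    _ = ∫ x, f t x ∂μ := by
        rw [integral_congr_ae (ae_of_all μ (interpolation t)),
          integral_finsetSum nodes fun (k : ℕ) _ => (hint k).mul_const ((ℓ k).eval t)]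

lemma exists_polynomial_eval_eq_det_one_add_smul {R M : Type*} [CommRing R] [Nontrivial R]
    [AddCommGroup M] [Module R M] [Module.Free R M] [Module.Finite R M] (f : M →ₗ[R] M) :
    ∃ p : R[X], p.natDegree ≤ finrank R M ∧ ∀ t : R, p.eval t = LinearMap.det (1 + t • f) := by
  let b := Free.chooseBasis R M
  let A := LinearMap.toMatrix b b f
  refine ⟨((Polynomial.X : R[X]) • A.map Polynomial.C + (1 : Matrix _ _ R).map Polynomial.C).det,
    ?_, fun t => ?_⟩
  · rw [finrank_eq_card_chooseBasisIndex]
    exact Polynomial.natDegree_det_X_add_C_le A 1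
  · rw [← Polynomial.coe_evalRingHom, RingHom.map_det, ← LinearMap.det_toMatrix b,
      map_add (LinearMap.toMatrix b b), map_smul (LinearMap.toMatrix b b), LinearMap.toMatrix_one,
      add_comm]
    congr 1
    ext i j
    by_cases hij : i = j <;> simp [A, hij, mul_comm t]

variable {E : Type*} [NormedAddCommGroup E]

lemma lipschitzWith_indicator [NormedSpace ℝ E] [FiniteDimensional ℝ E]
    {F : Type*} [NormedAddCommGroup F] {g : E → F} {K : ℝ≥0} {s : Set E}
    (hg : LipschitzOnWith K g (closure s)) (h0 : ∀ x ∈ frontier s, g x = 0) :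
    LipschitzWith K (s.indicator g) := by
  have norm_le : ∀ {x y}, x ∈ s → y ∉ s → ‖g x‖ ≤ K * dist x y := by
    intro x y hx hy
    obtain ⟨z, hz, hxz⟩ := exists_mem_frontier_infDist_compl_eq_dist hx fun h => hy (h ▸ mem_univ y)
    calc ‖g x‖ = dist (g x) (g z) := by rw [h0 z hz, dist_zero_right]
      _ ≤ K * dist x z := hg.dist_le_mul _ (subset_closure hx) _ (frontier_subset_closure hz)
      _ ≤ K * dist x y := by
        rw [← hxz]
        gcongr
        exact infDist_le_dist_of_mem hy
  refine LipschitzWith.of_dist_le_mul fun x y => ?_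
  by_cases hx : x ∈ s <;> by_cases hy : y ∈ s
  · simpa only [indicator_of_mem hx, indicator_of_mem hy]
      using hg.dist_le_mul _ (subset_closure hx) _ (subset_closure hy)
  · simpa only [indicator_of_mem hx, indicator_of_notMem hy, dist_zero_right] using norm_le hx hy
  · simpa only [indicator_of_notMem hx, indicator_of_mem hy, dist_zero_left, dist_comm x y]
      using norm_le hy hx
  · simp only [indicator_of_notMem hx, indicator_of_notMem hy, dist_self]
    positivity

lemma bijective_id_add_of_lipschitzWith [NormedSpace ℝ E] [CompleteSpace E] {g : E → E} {c : ℝ≥0}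
    (hc : c < 1) (hg : LipschitzWith c g) : Function.Bijective fun x => x + g x := by
  have approx : ApproximatesLinearOn (fun x => x + g x)
      (ContinuousLinearEquiv.refl ℝ E : E →L[ℝ] E) univ c := by
    rw [ApproximatesLinearOn.approximatesLinearOn_iff_lipschitzOnWith, lipschitzOnWith_univ]
    convert hg using 1
    ext x
    simp
  have hc' : Subsingleton E ∨ c < ‖((ContinuousLinearEquiv.refl ℝ E).symm : E →L[ℝ] E)‖₊⁻¹ := by
    refine (subsingleton_or_nontrivial E).imp_right fun (_ : Nontrivial E) => ?_
    rwa [ContinuousLinearEquiv.refl_symm, ContinuousLinearEquiv.coe_refl,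
      ContinuousLinearMap.nnnorm_id, inv_one]
  exact ⟨injOn_univ.1 (approx.injOn hc'), approx.surjective hc'⟩

lemma det_one_add_pos_of_norm_lt_one [NormedSpace ℝ E] [FiniteDimensional ℝ E] {A : E →L[ℝ] E}
    (hA : ‖A‖ < 1) : 0 < (1 + A).det := by
  have det_ne_zero : ∀ B ∈ ball (0 : E →L[ℝ] E) 1, (1 + B).det ≠ 0 := by
    intro B hB
    have : IsUnit (1 + B) := by
      simpa using isUnit_one_sub_of_norm_lt_one (x := -B) (by simpa using hB)
    exact ((this.map ContinuousLinearMap.toLinearMapRingHom).map LinearMap.det).ne_zero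
  have hcont : Continuous fun B : E →L[ℝ] E => (1 + B).det :=
    ContinuousLinearMap.continuous_det.comp (continuous_const_add 1)
  by_contra! hneg
  obtain ⟨B, hB, hB0⟩ := (convex_ball (0 : E →L[ℝ] E) 1).isPreconnected.intermediate_value
    (mem_ball_zero_iff.2 hA) (mem_ball_self one_pos) hcont.continuousOn
    ⟨hneg, by simp [ContinuousLinearMap.det]⟩
  exact det_ne_zero B hB hB0

variable [NormedSpace ℝ E] [FiniteDimensional ℝ E] [MeasurableSpace E] [BorelSpace E]
  (μ : Measure E) [μ.IsAddHaarMeasure]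

lemma setIntegral_det_one_add_of_lipschitzWith {g : E → E} {g' : E → E →L[ℝ] E} {s : Set E}
    {c : ℝ≥0} (hs : IsOpen s) (hg' : ∀ x ∈ s, HasFDerivAt g (g' x) x) (hc : c < 1)
    (hg : LipschitzWith c (s.indicator g)) : ∫ x in s, (1 + g' x).det ∂μ = μ.real s := by
  let φ : E → E := fun x => x + s.indicator g x
  have hφ : Function.Bijective φ := bijective_id_add_of_lipschitzWith hc hg
  have hφs : EqOn φ (fun x => x + g x) s := fun x hx => by simp only [φ, indicator_of_mem hx]
  have hφsc : EqOn φ id sᶜ := fun x hx => by simp only [φ, indicator_of_notMem hx, add_zero, id]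
  have image_eq : (fun x => x + g x) '' s = s := by
    rw [← hφs.image_eq, ← compl_inj_iff, ← image_compl_eq hφ, hφsc.image_eq_self]
  have det_pos : ∀ x ∈ s, 0 < (1 + g' x).det := by
    intro x hx
    have hderiv : HasFDerivAt (s.indicator g) (g' x) x :=
      (hg' x hx).congr_of_eventuallyEq (eqOn_indicator.eventuallyEq_of_mem (hs.mem_nhds hx))
    exact det_one_add_pos_of_norm_lt_one ((hderiv.le_of_lipschitz hg).trans_lt hc)
  calc ∫ x in s, (1 + g' x).det ∂μ
      = ∫ x in s, |(1 + g' x).det| • (1 : ℝ) ∂μ :=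
        setIntegral_congr_fun hs.measurableSet fun x hx => by
          simp only [abs_of_pos (det_pos x hx), smul_eq_mul, mul_one]
    _ = ∫ _ in (fun x => x + g x) '' s, (1 : ℝ) ∂μ :=
        (integral_image_eq_integral_abs_det_fderiv_smul μ (f := fun x => x + g x)
          (f' := fun x => 1 + g' x) hs.measurableSet
          (fun x hx => ((hasFDerivAt_id x).fun_add (hg' x hx)).hasFDerivWithinAt)
          (hφ.injective.injOn.congr hφs) fun _ => (1 : ℝ)).symm
    _ = μ.real s := by rw [image_eq, setIntegral_const, smul_eq_mul, mul_one]

lemma exists_polynomial_eval_eq_setIntegral_det {A : E → E →L[ℝ] E} (hA : Continuous A) {s : Set E}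
    (hs : Bornology.IsBounded s) :
    ∃ P : ℝ[X], ∀ t : ℝ, P.eval t = ∫ x in s, (1 + t • A x).det ∂μ := by
  refine exists_polynomial_eval_eq_integral (N := finrank ℝ E) (fun t => ?_) fun x =>
    exists_polynomial_eval_eq_det_one_add_smul (A x : E →ₗ[ℝ] E)
  have hcont : Continuous fun x => (1 + t • A x).det :=
    ContinuousLinearMap.continuous_det.comp (by fun_prop)
  exact (hcont.continuousOn.integrableOn_compact hs.isCompact_closure).mono_set subset_closure

-- The integral of `det (1 + t • D(f - id))` is a polynomial in `t`; it equals the volume for small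
-- `t`, when `id + t • (f - id)` permutes `s`, hence also at `t = 1`.
lemma setIntegral_det_fderiv_of_eq_id_on_frontier {f : E → E} {s : Set E} (hs : IsOpen s)
    (hconv : Convex ℝ s) (hbdd : Bornology.IsBounded s) (hf : ContDiff ℝ 1 f)
    (hid : EqOn f id (frontier s)) : ∫ x in s, (fderiv ℝ f x).det ∂μ = μ.real s := by
  let A : E → E →L[ℝ] E := fun x => fderiv ℝ f x - 1
  have hA : Continuous A := (hf.continuous_fderiv one_ne_zero).sub continuous_const
  have hder : ∀ x, HasFDerivAt (f - id) (A x) x := fun x =>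
    (hf.differentiable one_ne_zero x).hasFDerivAt.sub (hasFDerivAt_id x)
  obtain ⟨K, hK⟩ : ∃ K, LipschitzOnWith K (f - id) (closure s) := by
    obtain ⟨K, hK⟩ := (hbdd.isCompact_closure.image hA.nnnorm).bddAbove
    exact ⟨K, hconv.closure.lipschitzOnWith_of_nnnorm_hasFDerivWithin_le
      (fun x _ => (hder x).hasFDerivWithinAt) fun x hx => hK (mem_image_of_mem _ hx)⟩
  obtain ⟨P, hP⟩ := exists_polynomial_eval_eq_setIntegral_det μ hA hbdd
  have eval_small : ∀ t : ℝ, ‖t‖₊ * K < 1 → P.eval t = μ.real s := by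
    intro t ht
    rw [hP]
    refine setIntegral_det_one_add_of_lipschitzWith μ hs
      (fun x _ => (hder x).const_smul t) ht (lipschitzWith_indicator ?_ fun x hx => ?_)
    · exact (lipschitzWith_smul t).comp_lipschitzOnWith hK
    · simp [hid hx]
  have hsmall : {t : ℝ | ‖t‖₊ * K < 1} ∈ 𝓝 0 :=
    (isOpen_lt (by fun_prop) continuous_const).mem_nhds (by simp)
  have hPC : P = Polynomial.C (μ.real s) := P.eq_of_infinite_eval_eq _ <|
    (infinite_of_mem_nhds 0 hsmall).mono fun t ht => by simpa using eval_small t ht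
  simpa [hPC, A] using (hP 1).symm

end Brouwer

section NoRetraction

variable {E : Type*} [NormedAddCommGroup E] [InnerProductSpace ℝ E] [FiniteDimensional ℝ E]

lemma det_fderiv_eq_zero_of_norm_eventuallyEq_const {f : E → E} {x : E} {r : ℝ}
    (hr : (fun y => ‖f y‖) =ᶠ[𝓝 x] fun _ => r) (hfx : f x ≠ 0) (hf : DifferentiableAt ℝ f x) :
    (fderiv ℝ f x).det = 0 := by
  by_contra hdet
  obtain ⟨v, hv⟩ : ∃ v, fderiv ℝ f x v = f x :=
    ((Module.End.isUnit_iff _).1 <|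
      (LinearMap.isUnit_iff_isUnit_det _).2 (isUnit_iff_ne_zero.2 hdet)).2 (f x)
  have hconst : HasFDerivAt (fun y => ‖f y‖ ^ 2) (0 : E →L[ℝ] ℝ) x :=
    (hasFDerivAt_const (r ^ 2) x).congr_of_eventuallyEq (hr.fun_comp (· ^ 2))
  have hinner : 2 * inner ℝ (f x) (fderiv ℝ f x v) = 0 := by
    simpa using congr($(hf.hasFDerivAt.norm_sq.unique hconst) v)
  rw [hv] at hinner
  exact hfx (inner_self_eq_zero.1 ((mul_eq_zero_iff_left two_ne_zero).1 hinner))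

lemma not_exists_contDiff_retraction_sphere {R : ℝ} (hR : 0 < R) :
    ¬∃ f : E → E, ContDiff ℝ 1 f ∧ MapsTo f (closedBall 0 R) (sphere 0 R) ∧
      EqOn f id (sphere 0 R) := by
  rintro ⟨f, hf, hmaps, hid⟩
  borelize E
  have hnorm : ∀ x ∈ ball (0 : E) R, ‖f x‖ = R := fun x hx =>
    mem_sphere_zero_iff_norm.1 (hmaps (ball_subset_closedBall hx))
  have hdet : ∀ x ∈ ball (0 : E) R, (fderiv ℝ f x).det = 0 := fun x hx =>
    det_fderiv_eq_zero_of_norm_eventuallyEq_const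
      (eventually_of_mem (isOpen_ball.mem_nhds hx) hnorm)
      (norm_pos_iff.1 (hR.trans_eq (hnorm x hx).symm)) (hf.differentiable one_ne_zero x)
  have hvol : (Measure.addHaar : Measure E).real (ball 0 R) = 0 := by
    rw [← setIntegral_det_fderiv_of_eq_id_on_frontier _ isOpen_ball (convex_ball 0 R)
      isBounded_ball hf (hid.mono frontier_ball_subset_sphere)]
    exact setIntegral_eq_zero_of_forall_eq_zero hdet
  exact (measure_ball_pos Measure.addHaar (0 : E) hR).ne'
    ((measureReal_eq_zero_iff measure_ball_lt_top.ne).1 hvol)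

lemma exists_eq_zero_of_eventually_eq_self_cocompact {G : E → E} (hG : Continuous G)
    (hid : ∀ᶠ x in cocompact E, G x = x) : ∃ x, G x = 0 := by
  by_contra! hne
  rw [← cobounded_eq_cocompact, hasBasis_cobounded_norm.eventually_iff] at hid
  obtain ⟨r, -, hr⟩ := hid
  let R := max r 0 + 1
  have hrR : r < R := (le_max_left r 0).trans_lt (lt_add_one _)
  have hR : 0 < R := by positivity
  obtain ⟨g, hg, hdist, heq, -⟩ := hG.exists_contDiff_approx_and_eqOn (ε := fun x => ‖G x‖) 1
    hG.norm (fun x => norm_pos_iff.2 (hne x)) (S := {x | R ≤ ‖x‖}) (U := {x | r < ‖x‖})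
    (isClosed_le continuous_const continuous_norm)
    ((isOpen_lt continuous_const continuous_norm).mem_nhdsSet.2 fun _ hx => hrR.trans_le hx)
    (contDiffOn_id.congr fun x (hx : r < ‖x‖) => hr hx.le)
  have hg0 : ∀ x, g x ≠ 0 := fun x hx => by simpa [hx] using hdist x
  refine not_exists_contDiff_retraction_sphere hR
    ⟨fun x => (R / ‖g x‖) • g x, ?_, fun x _ => ?_, fun x hx => ?_⟩
  · exact (contDiff_const.div (hg.norm ℝ hg0) fun x => norm_ne_zero_iff.2 (hg0 x)).smul hg
  · rw [mem_sphere_zero_iff_norm, norm_smul, norm_div, norm_norm,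
      div_mul_cancel₀ _ (norm_ne_zero_iff.2 (hg0 x)), Real.norm_of_nonneg hR.le]
  · have hxR : ‖x‖ = R := mem_sphere_zero_iff_norm.1 hx
    have hgx : g x = x := (heq hxR.ge).trans (hr (hrR.le.trans_eq hxR.symm))
    simp only [hgx, hxR, div_self hR.ne', one_smul, id]

theorem surjective_of_eventually_eq_self_cocompact {F : Type*} [NormedAddCommGroup F]
    [NormedSpace ℝ F] [FiniteDimensional ℝ F] {G : F → F} (hG : Continuous G)
    (hid : ∀ᶠ x in cocompact F, G x = x) : Function.Surjective G := by
  intro q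
  let φ : EuclideanSpace ℝ (Fin (finrank ℝ F)) ≃ₜ F :=
    (toEuclidean (E := F)).symm.toHomeomorph.trans (Homeomorph.addRight q)
  have hφq : φ 0 = q := by simp [φ]
  obtain ⟨x, hx⟩ := exists_eq_zero_of_eventually_eq_self_cocompact (G := φ.symm ∘ G ∘ φ)
    (by fun_prop) ((φ.isClosedEmbedding.tendsto_cocompact.eventually hid).mono fun x hx => by
      simp only [Function.comp_apply, hx, φ.symm_apply_apply])
  exact ⟨φ x, by rw [← hφq, ← φ.symm_apply_eq]; exact hx⟩

end NoRetraction

section SphereProduct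

/-- The radial projection `x ↦ x / ‖x‖` onto the unit sphere, with the value `q` at the origin. -/
noncomputable def radialProj {E : Type*} [NormedAddCommGroup E] [NormedSpace ℝ E]
    (q : sphere (0 : E) 1) (x : E) : sphere (0 : E) 1 :=
  open Classical in
  if h : x = 0 then q else ⟨‖x‖⁻¹ • x, by simp [norm_smul, norm_ne_zero_iff.2 h]⟩

lemma coe_radialProj {E : Type*} [NormedAddCommGroup E] [NormedSpace ℝ E] (q : sphere (0 : E) 1)
    {x : E} (hx : x ≠ 0) : (radialProj q x : E) = ‖x‖⁻¹ • x := by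
  simp [radialProj, hx]

lemma norm_smul_radialProj {E : Type*} [NormedAddCommGroup E] [NormedSpace ℝ E]
    (q : sphere (0 : E) 1) (x : E) : ‖x‖ • (radialProj q x : E) = x := by
  rcases eq_or_ne x 0 with rfl | hx
  · rw [norm_zero, zero_smul]
  · rw [coe_radialProj q hx, smul_inv_smul₀ (norm_ne_zero_iff.2 hx)]

lemma continuousAt_radialProj {E : Type*} [NormedAddCommGroup E] [NormedSpace ℝ E]
    (q : sphere (0 : E) 1) {x : E} (hx : x ≠ 0) : ContinuousAt (radialProj q) x := by
  rw [Topology.IsInducing.subtypeVal.continuousAt_iff]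
  refine ((continuousAt_id.norm.inv₀ (norm_ne_zero_iff.2 hx)).smul continuousAt_id).congr ?_
  exact (eventually_ne_nhds hx).mono fun y hy => (coe_radialProj q hy).symm

lemma exists_cutoff_pi_sphere {ι : Type*} [Finite ι] {E : ι → Type*}
    [∀ i, NormedAddCommGroup (E i)] [∀ i, ProperSpace (E i)] :
    ∃ ρ : C(∀ i, E i, I), (∀ x : ∀ i, E i, (∀ i, ‖x i‖ = 1) → ρ x = 1) ∧
      (∀ (x : ∀ i, E i) i, x i = 0 → ∀ᶠ y in 𝓝 x, ρ y = 0) ∧ ∀ᶠ x in cocompact _, ρ x = 0 := by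
  let s : Set (∀ i, E i) := univ.pi fun i => sphere 0 1
  let t : Set (∀ i, E i) := ⋃ i, {x | ‖x i‖ ≤ 1 / 2}
  have hs : IsCompact s := isCompact_univ_pi fun i => isCompact_sphere (0 : E i) 1
  have ht : IsClosed t := isClosed_iUnion_of_finite fun i =>
    isClosed_le (by fun_prop) continuous_const
  have hst : Disjoint s t := disjoint_left.2 fun x hxs hxt => by
    obtain ⟨i, hi : ‖x i‖ ≤ 1 / 2⟩ := mem_iUnion.1 hxt
    norm_num [mem_sphere_zero_iff_norm.1 (hxs i (mem_univ i))] at hi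
  obtain ⟨ρ, hρs, hρt, hρc, hρI⟩ := exists_continuous_one_zero_of_isCompact hs ht hst
  refine ⟨⟨fun x => ⟨ρ x, hρI x⟩, by fun_prop⟩, fun x hx => Subtype.ext <| hρs fun i _ =>
    mem_sphere_zero_iff_norm.2 (hx i), fun x i hi => ?_, ?_⟩
  · have hnear : ∀ᶠ y in 𝓝 x, ‖y i‖ < 1 / 2 :=
      (isOpen_lt (by fun_prop) continuous_const).mem_nhds (by norm_num [hi])
    exact hnear.mono fun y hy => Subtype.ext <| hρt <| mem_iUnion.2 ⟨i, hy.le⟩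
  · exact eventually_of_mem hρc.isCompact.compl_mem_cocompact fun x hx =>
      Subtype.ext (image_eq_zero_of_notMem_tsupport (f := ρ) hx)

variable {ι : Type*} {E : ι → Type*} [∀ i, NormedAddCommGroup (E i)] [∀ i, NormedSpace ℝ (E i)]
  {f : C(∀ i, sphere (0 : E i) 1, ∀ i, sphere (0 : E i) 1)}

/-- The self-map of `∏ i, E i` which keeps all the norms `‖x i‖` and moves the directions
`x i / ‖x i‖` by the homotopy `H` at time `ρ x`. The point `q` only serves as the direction of
vanishing coordinates. -/
noncomputable def radialExtension (H : (ContinuousMap.id _).Homotopy f)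
    (ρ : C(∀ i, E i, I)) (q : ∀ i, sphere (0 : E i) 1) (x : ∀ i, E i) : ∀ i, E i :=
  fun i => ‖x i‖ • (H (ρ x, fun j => radialProj (q j) (x j)) i : E i)

lemma radialExtension_eq_self (H : (ContinuousMap.id _).Homotopy f) {ρ : C(∀ i, E i, I)}
    (q : ∀ i, sphere (0 : E i) 1) {x : ∀ i, E i} (hx : ρ x = 0) : radialExtension H ρ q x = x := by
  ext i
  simp only [radialExtension, hx, H.apply_zero, ContinuousMap.id_apply, norm_smul_radialProj]

lemma continuous_radialExtension (H : (ContinuousMap.id _).Homotopy f) {ρ : C(∀ i, E i, I)}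
    (hρ : ∀ (x : ∀ i, E i) i, x i = 0 → ∀ᶠ y in 𝓝 x, ρ y = 0) (q : ∀ i, sphere (0 : E i) 1) :
    Continuous (radialExtension H ρ q) := by
  refine continuous_iff_continuousAt.2 fun x => ?_
  by_cases! hx : ∃ i, x i = 0
  · obtain ⟨i, hi⟩ := hx
    exact continuousAt_id.congr <|
      (hρ x i hi).mono fun y hy => (radialExtension_eq_self H q hy).symm
  · have hdir : ContinuousAt (fun y : ∀ i, E i => fun i => radialProj (q i) (y i)) x :=
      continuousAt_pi.2 fun i => ContinuousAt.comp (f := fun y : ∀ i, E i => y i)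
        (continuousAt_radialProj (q i) (hx i)) (continuousAt_apply i x)
    have hH : ContinuousAt (fun y => H (ρ y, fun i => radialProj (q i) (y i))) x :=
      H.continuous.continuousAt.comp (ρ.continuous.continuousAt.prodMk hdir)
    exact continuousAt_pi.2 fun i => (continuousAt_apply i x).norm.smul
      (continuous_subtype_val.continuousAt.comp (continuousAt_pi.1 hH i))

lemma apply_radialProj_eq_of_radialExtension_eq (H : (ContinuousMap.id _).Homotopy f)
    {ρ : C(∀ i, E i, I)} (hρ : ∀ x : ∀ i, E i, (∀ i, ‖x i‖ = 1) → ρ x = 1)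
    {q : ∀ i, sphere (0 : E i) 1} {x : ∀ i, E i} (hx : radialExtension H ρ q x = fun i => ↑(q i)) :
    f (fun i => radialProj (q i) (x i)) = q := by
  have hcoord : ∀ i, ‖x i‖ • (H (ρ x, fun j => radialProj (q j) (x j)) i : E i) = q i :=
    congrFun hx
  have hnorm : ∀ i, ‖x i‖ = 1 := fun i => by simpa [norm_smul] using congr(‖$(hcoord i)‖)
  ext i
  simpa only [hρ x hnorm, hnorm, one_smul, H.apply_one] using hcoord i

theorem surjective_of_homotopic_id_pi_sphere [Finite ι] [∀ i, FiniteDimensional ℝ (E i)]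
    (hf : (ContinuousMap.id _).Homotopic f) : Function.Surjective f := by
  intro q
  obtain ⟨H⟩ := hf
  cases nonempty_fintype ι
  have : ∀ i, ProperSpace (E i) := fun i => FiniteDimensional.proper_real (E i)
  obtain ⟨ρ, hρ1, hρ0, hρc⟩ := exists_cutoff_pi_sphere (E := E)
  obtain ⟨x, hx⟩ := surjective_of_eventually_eq_self_cocompact (continuous_radialExtension H hρ0 q)
    (hρc.mono fun x hx => radialExtension_eq_self H q hx) fun i => (q i : E i)
  exact ⟨_, apply_radialProj_eq_of_radialExtension_eq H hρ1 hx⟩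

end SphereProduct

section Contraction

/-- The inclusion of `U` into the ambient space is homotopic to the constant map with value `x`. The
sets allowed in the covers of `LScat` are the open sets with this property for some `x`. -/
def ContractsTo {X : Type*} [TopologicalSpace X] (U : Set X) (x : X) : Prop :=
  (⟨Subtype.val, continuous_subtype_val⟩ : C(U, X)).Homotopic (ContinuousMap.const U x)

lemma ContractsTo.homotopic_const {X Y : Type*} [TopologicalSpace X] [TopologicalSpace Y]
    {U : Set X} {x : X} (hU : ContractsTo U x) {f : C(Y, X)} (hf : ∀ y, f y ∈ U) :
    f.Homotopic (ContinuousMap.const Y x) :=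
  Homotopic.comp hU (.refl (⟨fun y => ⟨f y, hf y⟩, by fun_prop⟩ : C(Y, U)))

lemma homotopic_pi_of_eval_comp {ι Y : Type*} [TopologicalSpace Y] {X : ι → Type*}
    [∀ i, TopologicalSpace (X i)] {f g : C(Y, ∀ i, X i)}
    (hfg : ∀ i, ((ContinuousMap.eval i).comp f).Homotopic ((ContinuousMap.eval i).comp g)) :
    f.Homotopic g :=
  Homotopic.pi hfg

lemma homotopic_of_pairwise_disjoint_cover {κ Y Z : Type*} [TopologicalSpace Y]
    [TopologicalSpace Z] {S : κ → Set Y} (hS : ∀ k, IsOpen (S k))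
    (hdisj : Pairwise fun k l => Disjoint (S k) (S l)) (hcov : ∀ y, ∃ k, y ∈ S k) {f g : C(Y, Z)}
    (hfg : ∀ k, (f.restrict (S k)).Homotopic (g.restrict (S k))) : f.Homotopic g := by
  have H k := (hfg k).some
  let T : κ → Set (I × Y) := fun k => Prod.snd ⁻¹' S k
  let φ : ∀ k, C(T k, Z) := fun k => ⟨fun z => H k (z.1.1, ⟨z.1.2, z.2⟩), by fun_prop⟩
  have hφ : ∀ k l z (hk : z ∈ T k) (hl : z ∈ T l), φ k ⟨z, hk⟩ = φ l ⟨z, hl⟩ := by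
    intro k l z hk hl
    obtain rfl : k = l := by_contra fun h => disjoint_left.1 (hdisj h) hk hl
    rfl
  have hT : ∀ z, ∃ k, T k ∈ 𝓝 z := fun z =>
    (hcov z.2).imp fun k hk => ((hS k).preimage continuous_snd).mem_nhds hk
  have lift_apply : ∀ t y k (hk : y ∈ S k), liftCover T φ hφ hT (t, y) = H k (t, ⟨y, hk⟩) :=
    fun t y k hk => liftCover_coe (⟨(t, y), hk⟩ : T k)
  refine ⟨⟨liftCover T φ hφ hT, fun y => ?_, fun y => ?_⟩⟩ <;> obtain ⟨k, hk⟩ := hcov y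
  · exact (lift_apply 0 y k hk).trans ((H k).apply_zero _)
  · exact (lift_apply 1 y k hk).trans ((H k).apply_one _)

/-- The points `y` whose coordinates in `J` lie strictly below all the others, where moreover the
former are `< 1` and the latter are `> 0`. -/
def gapCell {ι : Type*} (J : Finset ι) : Set (ι → ℝ) :=
  {y | (∀ i ∈ J, y i < 1) ∧ (∀ j ∉ J, 0 < y j) ∧ ∀ i ∈ J, ∀ j ∉ J, y i < y j}

lemma isOpen_gapCell {ι : Type*} [Finite ι] (J : Finset ι) : IsOpen (gapCell J) := by
  simp only [gapCell, ofPred_and, ofPred_forall]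
  refine (isOpen_iInter_of_finite fun i => isOpen_iInter_of_finite fun _ => ?_).inter
    ((isOpen_iInter_of_finite fun j => isOpen_iInter_of_finite fun _ => ?_).inter
      (isOpen_iInter_of_finite fun i => isOpen_iInter_of_finite fun _ =>
        isOpen_iInter_of_finite fun j => isOpen_iInter_of_finite fun _ => ?_))
  all_goals exact isOpen_lt (by fun_prop) (by fun_prop)

lemma disjoint_gapCell {ι : Type*} {J K : Finset ι} (hcard : J.card = K.card) (hne : J ≠ K) :
    Disjoint (gapCell J) (gapCell K) := by
  obtain ⟨i, hiJ, hiK⟩ := Finset.not_subset.1 fun h =>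
    hne (Finset.eq_of_subset_of_card_le h hcard.ge)
  obtain ⟨j, hjK, hjJ⟩ := Finset.not_subset.1 fun h =>
    hne (Finset.eq_of_subset_of_card_le h hcard.le).symm
  exact disjoint_left.2 fun y hyJ hyK => (hyJ.2.2 i hiJ j hjJ).asymm (hyK.2.2 j hjK i hiK)

lemma exists_mem_gapCell {ι : Type*} [Finite ι] (y : ι → ℝ) : ∃ J, y ∈ gapCell J := by
  cases nonempty_fintype ι
  refine ⟨Finset.univ.filter fun i => y i ≤ 0, ?_⟩
  simp only [gapCell, Finset.mem_filter_univ, not_le, mem_ofPred_eq]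
  exact ⟨fun i hi => hi.trans_lt one_pos, fun j hj => hj, fun i hi j hj => hi.trans_lt hj⟩

lemma contractsTo_iUnion_gapCell {ι : Type*} [Finite ι] {X : ι → Type*}
    [∀ i, TopologicalSpace (X i)] {A B : ∀ i, Set (X i)} {c : ∀ i, X i}
    (hA : ∀ i, ContractsTo (A i) (c i)) (hB : ∀ i, ContractsTo (B i) (c i))
    {φ : C(∀ i, X i, ι → ℝ)} (hφA : ∀ x i, φ x i < 1 → x i ∈ A i)
    (hφB : ∀ x i, 0 < φ x i → x i ∈ B i) (k : ℕ) :
    ContractsTo (⋃ J : {J : Finset ι // J.card = k}, φ ⁻¹' gapCell J) c := by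
  refine homotopic_of_pairwise_disjoint_cover
    (S := fun J : {J : Finset ι // J.card = k} => Subtype.val ⁻¹' (φ ⁻¹' gapCell J.1))
    (fun J => ((isOpen_gapCell J.1).preimage φ.continuous).preimage continuous_subtype_val)
    (fun J K hJK => ((disjoint_gapCell (J.2.trans K.2.symm)
      (Subtype.coe_ne_coe.2 hJK)).preimage _).preimage _)
    (fun x => by obtain ⟨J, hJ⟩ := mem_iUnion.1 x.2; exact ⟨J, hJ⟩)
    fun J => homotopic_pi_of_eval_comp fun i => ?_
  by_cases hi : i ∈ J.1
  · exact (hA i).homotopic_const fun x => hφA _ i (x.2.1 i hi)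
  · exact (hB i).homotopic_const fun x => hφB _ i (x.2.2.1 i hi)

theorem LScat_pi_le {ι : Type*} [Fintype ι] {X : ι → Type*} [∀ i, TopologicalSpace (X i)]
    [∀ i, NormalSpace (X i)] {A B : ∀ i, Set (X i)} {c : ∀ i, X i} (hAo : ∀ i, IsOpen (A i))
    (hBo : ∀ i, IsOpen (B i)) (hAB : ∀ i, A i ∪ B i = univ) (hA : ∀ i, ContractsTo (A i) (c i))
    (hB : ∀ i, ContractsTo (B i) (c i)) : LScat (∀ i, X i) ≤ Fintype.card ι := by
  choose ψ hψB hψA _ using fun i => exists_continuous_zero_one_of_isClosed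
    (hBo i).isClosed_compl (hAo i).isClosed_compl
    (disjoint_compl_left_iff_subset.2 (compl_subset_iff_union.2 (hAB i)))
  let φ : C(∀ i, X i, ι → ℝ) := ⟨fun x i => ψ i (x i), by fun_prop⟩
  have hφA : ∀ x i, φ x i < 1 → x i ∈ A i := fun x i h => by_contra fun hx => h.ne (hψA i hx)
  have hφB : ∀ x i, 0 < φ x i → x i ∈ B i := fun x i h => by_contra fun hx => h.ne' (hψB i hx)
  refine sInf_le ⟨Fintype.card ι, rfl, fun k => ⋃ J : {J : Finset ι // J.card = k}, φ ⁻¹' gapCell J,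
    fun k => isOpen_iUnion fun J => (isOpen_gapCell J.1).preimage φ.continuous,
    eq_univ_of_forall fun x => ?_, fun k => ⟨c, contractsTo_iUnion_gapCell hA hB hφA hφB k⟩⟩
  obtain ⟨J, hJ⟩ := exists_mem_gapCell (φ x)
  exact mem_iUnion₂.2 ⟨⟨J.card, Nat.lt_succ_of_le J.card_le_univ⟩, ⟨J, rfl⟩, hJ⟩

lemma ContractsTo.exists_homotopic_id_eqOn_const {X : Type*} [TopologicalSpace X] [NormalSpace X]
    {U A : Set X} {x : X} (hUx : ContractsTo U x) (hU : IsOpen U) (hA : IsClosed A) (hAU : A ⊆ U) :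
    ∃ f : C(X, X), (ContinuousMap.id X).Homotopic f ∧ EqOn f (fun _ => x) A := by
  classical
  obtain ⟨H⟩ := hUx
  obtain ⟨V, hV, hAV, hVU⟩ := normal_exists_closure_subset hA hU hAU
  obtain ⟨ρ, hρ0, hρ1, hρ⟩ := exists_continuous_zero_one_of_isClosed hV.isClosed_compl hA
    (disjoint_compl_left_iff_subset.2 hAV)
  let τ : C(X, I) := ⟨fun u => ⟨ρ u, hρ u⟩, by fun_prop⟩
  let F : I × X → X := fun z => if hz : z.2 ∈ U then H (z.1 * τ z.2, ⟨z.2, hz⟩) else z.2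
  have F_of_mem : ∀ z (hz : z.2 ∈ U), F z = H (z.1 * τ z.2, ⟨z.2, hz⟩) := fun z hz => dif_pos hz
  have F_eq_snd : ∀ z, z.1 * τ z.2 = 0 → F z = z.2 := by
    intro z hz
    by_cases hzU : z.2 ∈ U
    · rw [F_of_mem z hzU, hz, H.apply_zero]
      rfl
    · exact dif_neg hzU
  have hFU : ContinuousOn F (Prod.snd ⁻¹' U) := by
    rw [continuousOn_iff_continuous_domRestrict]
    have : Continuous fun z : Prod.snd ⁻¹' U => H (z.1.1 * τ z.1.2, ⟨z.1.2, z.2⟩) := by fun_prop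
    exact this.congr fun z => (F_of_mem z.1 z.2).symm
  have hFV : ContinuousOn F (Prod.snd ⁻¹' (closure V)ᶜ) :=
    continuous_snd.continuousOn.congr fun z hz => F_eq_snd z <| by
      rw [show τ z.2 = 0 from Subtype.ext (hρ0 fun h => hz (subset_closure h)), mul_zero]
  have hF : Continuous F := by
    rw [← continuousOn_univ, ← union_compl_self (Prod.snd ⁻¹' closure V)]
    refine (hFU.union_of_isOpen hFV (hU.preimage continuous_snd)
      (isClosed_closure.isOpen_compl.preimage continuous_snd)).mono ?_
    exact union_subset_union_left _ (preimage_mono hVU)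
  refine ⟨⟨fun u => F (1, u), by fun_prop⟩,
    ⟨⟨⟨F, hF⟩, fun u => F_eq_snd _ (zero_mul _), fun _ => rfl⟩⟩, fun u hu => ?_⟩
  have hτ : τ u = 1 := Subtype.ext (hρ1 hu)
  exact (F_of_mem _ (hAU hu)).trans (by rw [hτ, mul_one, H.apply_one]; rfl)

theorem card_le_LScat_pi {ι : Type*} [Fintype ι] {X : ι → Type*} [∀ i, TopologicalSpace (X i)]
    [NormalSpace (∀ i, X i)] [∀ i, Nontrivial (X i)]
    (hsurj : ∀ f : C(∀ i, X i, ∀ i, X i),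
      (ContinuousMap.id _).Homotopic f → Function.Surjective f) :
    Fintype.card ι ≤ LScat (∀ i, X i) := by
  refine le_sInf ?_
  rintro _ ⟨m, rfl, U, hUo, hcov, hU⟩
  by_contra! hlt
  obtain ⟨A, hAcov, hAc, hAU⟩ := exists_iUnion_eq_closed_subset hUo (fun _ => toFinite _) hcov
  choose x hx using hU
  choose f hf hfA using fun k =>
    ContractsTo.exists_homotopic_id_eqOn_const (hx k) (hUo k) (hAc k) (hAU k)
  obtain ⟨g, hg⟩ : ∃ g : ι → Fin (m + 1), Function.Surjective g :=
    Function.exists_surjective_iff.2 ⟨⟨fun _ => 0⟩, Function.Embedding.nonempty_of_card_le <| by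
      simpa using mod_cast hlt⟩
  choose q hq using fun i => exists_ne (x (g i) i)
  have hfg : (ContinuousMap.id _).Homotopic (.pi fun i => (ContinuousMap.eval i).comp (f (g i))) :=
    Homotopic.pi fun i => (Homotopic.refl (ContinuousMap.eval i)).comp (hf (g i))
  obtain ⟨u, hu⟩ := hsurj _ hfg q
  obtain ⟨k, hk⟩ := mem_iUnion.1 (hAcov.symm ▸ mem_univ u)
  obtain ⟨i, rfl⟩ := hg k
  refine hq i ?_
  rw [← hu]
  exact congrFun (hfA (g i) hk) i

end Contraction

section Sphere

lemma contractsTo_compl_singleton_sphere {E : Type*} [NormedAddCommGroup E]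
    [InnerProductSpace ℝ E] {v c : sphere (0 : E) 1} (hc : c ≠ v) : ContractsTo {v}ᶜ c := by
  let e := stereographic (norm_eq_of_mem_sphere v)
  have hsource : ∀ x ≠ v, x ∈ e.source := fun x hx => by simpa [e] using hx
  let proj : C(({v}ᶜ : Set (sphere (0 : E) 1)), (ℝ ∙ (v : E))ᗮ) :=
    ⟨fun x => e x, e.continuousOn.comp_continuous continuous_subtype_val fun x => hsource x x.2⟩
  let invProj : C((ℝ ∙ (v : E))ᗮ, sphere (0 : E) 1) :=
    ⟨e.symm, continuousOn_univ.1 e.continuousOn_symm⟩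
  have hid : invProj.comp proj = ⟨Subtype.val, continuous_subtype_val⟩ :=
    ContinuousMap.ext fun x => e.left_inv (hsource x x.2)
  have hconst : invProj.comp (ContinuousMap.const _ (e c)) =
      ContinuousMap.const ({v}ᶜ : Set (sphere (0 : E) 1)) c :=
    ContinuousMap.ext fun _ => e.left_inv (hsource c hc)
  rw [ContractsTo, ← hid, ← hconst]
  exact (Homotopic.refl invProj).comp ⟨.affine proj _⟩

lemma exists_ne_ne_neg_sphere {E : Type*} [NormedAddCommGroup E] [NormedSpace ℝ E]
    (hE : 1 < Module.rank ℝ E) (p : sphere (0 : E) 1) : ∃ c, c ≠ p ∧ c ≠ -p := by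
  have : Infinite (sphere (0 : E) 1) := infinite_coe_iff.2 <|
    (isPreconnected_sphere hE 0 1).infinite_of_nontrivial
      ⟨p, p.2, -p, (-p).2, Subtype.coe_ne_coe.2 (ne_neg_of_mem_unit_sphere ℝ p)⟩
  obtain ⟨c, hc⟩ := (toFinite {p, -p}).infinite_compl.nonempty
  exact ⟨c, by simpa only [mem_compl_iff, mem_insert_iff, mem_singleton_iff, not_or] using hc⟩

lemma LScat_pi_sphere_le {ι : Type*} [Fintype ι] {E : ι → Type*} [∀ i, NormedAddCommGroup (E i)]
    [∀ i, InnerProductSpace ℝ (E i)] (hE : ∀ i, 1 < Module.rank ℝ (E i)) :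
    LScat (∀ i, sphere (0 : E i) 1) ≤ Fintype.card ι := by
  have hnontrivial i : Nontrivial (E i) := rank_pos_iff_nontrivial.1 (one_pos.trans (hE i))
  have p i : sphere (0 : E i) 1 := (NormedSpace.sphere_nonempty.2 zero_le_one).to_subtype.some
  choose c hcp hcn using fun i => exists_ne_ne_neg_sphere (hE i) (p i)
  refine LScat_pi_le (fun i => isOpen_compl_singleton) (fun i => isOpen_compl_singleton)
    (fun i => ?_) (fun i => contractsTo_compl_singleton_sphere (hcp i))
    fun i => contractsTo_compl_singleton_sphere (hcn i)
  rw [← compl_inter, compl_univ_iff.2]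
  exact singleton_inter_eq_empty.2 (ne_neg_of_mem_unit_sphere ℝ (p i))

theorem LScat_pi_sphere_general {ι : Type*} [Fintype ι] {E : ι → Type*}
    [∀ i, NormedAddCommGroup (E i)] [∀ i, InnerProductSpace ℝ (E i)]
    [∀ i, FiniteDimensional ℝ (E i)] (hE : ∀ i, 1 < finrank ℝ (E i)) :
    LScat (∀ i, sphere (0 : E i) 1) = Fintype.card ι := by
  have hrank i : 1 < Module.rank ℝ (E i) := one_lt_rank_of_one_lt_finrank (hE i)
  have hnontrivial i : Nontrivial (sphere (0 : E i) 1) := by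
    have : Nontrivial (E i) := rank_pos_iff_nontrivial.1 (one_pos.trans (hrank i))
    obtain ⟨p, hp⟩ := (NormedSpace.sphere_nonempty (x := (0 : E i)) (r := 1)).2 zero_le_one
    exact ⟨⟨p, hp⟩, -⟨p, hp⟩, ne_neg_of_mem_unit_sphere ℝ _⟩
  exact (LScat_pi_sphere_le hrank).antisymm
    (card_le_LScat_pi fun _ => surjective_of_homotopic_id_pi_sphere)

end Sphere

/-- The LS-category of a product of `n` copies of the sphere `S^d` (with the product
topology) is `n`, for `n ≥ 1` and `d ≥ 1`. -/
theorem LScat_pi_sphere (n d : ℕ) (hn : 1 ≤ n) (hd : 1 ≤ d) :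
    LScat (Fin n → unitSphere d) = (n : ℕ∞) :=
  (LScat_pi_sphere_general (E := fun _ : Fin n => EuclideanSpace ℝ (Fin (d + 1))) fun _ => by
    rw [finrank_euclideanSpace_fin]; omega).trans (by rw [Fintype.card_fin])
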